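/- Let R be the localization of the Gaussian integers Z[i] away from the element 2 (i.e. R = Z[i][1/2]). Then in the quotient ring R[X]/(X² − 2X), the residue class of X − 1 is a square; indeed the elements a = (1 − i)/2 and b = i of R satisfy 2·a·(a + b) = 1 and b² = −1, so that (a·X + b)² ≡ X − 1 modulo (X² − 2X). -/

import Mathlib

open Polynomial

/-- The element `(1 - i)/2` of `ℤ[i][1/2]`. -/
noncomputable def gaussHalfOneSubI : Localization.Away (2 : GaussianInt) :=
  algebraMap GaussianInt (Localization.Away (2 : GaussianInt)) (1 - Zsqrtd.sqrtd) *
    Localization.Away.invSelf 2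

/-- The element `i` of `ℤ[i][1/2]`. -/
noncomputable def gaussI : Localization.Away (2 : GaussianInt) :=
  algebraMap GaussianInt (Localization.Away (2 : GaussianInt)) Zsqrtd.sqrtd

/-! Modulo `X² - cX` the square of `aX + b` is `a(ca + 2b)X + b²`, so for `c = 2` it is `X - 1` as
soon as `2a(a + b) = 1` and `b² = -1`. If `2` is invertible and `i² = -1`, then `b = i` and
`a = (1 - i)/2` satisfy this, because `a + i = (1 + i)/2` and `(1 - i)(1 + i) = 2`. -/

section CommRing

variable {R : Type*} [CommRing R]

theorem mk_C_mul_X_add_C_sq (a b c : R) :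
    Ideal.Quotient.mk (Ideal.span {(X : R[X]) ^ 2 - C c * X}) ((C a * X + C b) ^ 2) =
      Ideal.Quotient.mk (Ideal.span {(X : R[X]) ^ 2 - C c * X})
        (C (a * (c * a + 2 * b)) * X + C (b ^ 2)) := by
  rw [Ideal.Quotient.mk_eq_mk_iff_sub_mem, Ideal.mem_span_singleton]
  refine ⟨C a ^ 2, ?_⟩
  simp only [map_mul, map_add, map_pow, map_ofNat]
  ring

theorem two_mul_mul_add_eq_one_of_sq_eq_neg_one {a i : R} (h2 : IsUnit (2 : R)) (ha : 2 * a = 1 - i)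
    (hi : i ^ 2 = -1) : 2 * a * (a + i) = 1 := by
  have hai : 2 * (a + i) = 1 + i := by linear_combination ha
  refine h2.mul_left_cancel ?_
  calc 2 * (2 * a * (a + i)) = 2 * a * (2 * (a + i)) := by ring
    _ = (1 - i) * (1 + i) := by rw [ha, hai]
    _ = 2 * 1 := by linear_combination -hi

theorem X_sub_one_square_in_localized_gaussian_quotient_general {a i : R}
    (h2 : IsUnit (2 : R)) (ha : 2 * a = 1 - i) (hi : i ^ 2 = -1) :
    IsSquare (Ideal.Quotient.mk (Ideal.span {(X : R[X]) ^ 2 - 2 * X}) (X - 1)) ∧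
    2 * a * (a + i) = 1 ∧
    Ideal.Quotient.mk (Ideal.span {(X : R[X]) ^ 2 - 2 * X}) ((C a * X + C i) ^ 2) =
      Ideal.Quotient.mk (Ideal.span {(X : R[X]) ^ 2 - 2 * X}) (X - 1) := by
  have hai : 2 * a * (a + i) = 1 := two_mul_mul_add_eq_one_of_sq_eq_neg_one h2 ha hi
  have hcoeff : a * (2 * a + 2 * i) = 1 := by linear_combination hai
  have hmk := mk_C_mul_X_add_C_sq a i 2
  rw [hcoeff, hi, map_neg, map_one, one_mul, ← sub_eq_add_neg, map_ofNat] at hmk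
  exact ⟨hmk ▸ (IsSquare.sq _).map _, hai, hmk⟩

end CommRing

theorem algebraMap_mul_localizationAway_invSelf {R : Type*} [CommRing R] (r : R) :
    algebraMap R (Localization.Away r) r * Localization.Away.invSelf r = 1 := by
  rw [Localization.Away.invSelf, Localization.mk_eq_mk']
  exact IsLocalization.Away.mul_invSelf r

theorem two_mul_invSelf_two :
    (2 : Localization.Away (2 : GaussianInt)) * Localization.Away.invSelf 2 = 1 := by
  simpa only [map_ofNat] using algebraMap_mul_localizationAway_invSelf (2 : GaussianInt)

theorem gaussI_sq : gaussI ^ 2 = -1 := by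
  rw [gaussI, ← map_pow, sq, Zsqrtd.dmuld, Int.cast_neg, Int.cast_one, map_neg, map_one]

theorem two_mul_gaussHalfOneSubI : 2 * gaussHalfOneSubI = 1 - gaussI := by
  rw [gaussHalfOneSubI, mul_left_comm, two_mul_invSelf_two, mul_one, map_sub, map_one, gaussI]

/-- Let `R = ℤ[i][1/2]` be the localization of the Gaussian integers away from `2`. Then
in `R[X]/(X² − 2X)` the residue class of `X − 1` is a square; indeed `a = (1 − i)/2` and
`b = i` satisfy `2·a·(a + b) = 1` and `b² = −1`, and `(a·X + b)² ≡ X − 1 mod (X² − 2X)`. -/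
theorem X_sub_one_square_in_localized_gaussian_quotient :
    IsSquare ((Ideal.Quotient.mk
        (Ideal.span {(X : Polynomial (Localization.Away (2 : GaussianInt))) ^ 2 - 2 * X}))
        (X - 1)) ∧
    2 * gaussHalfOneSubI * (gaussHalfOneSubI + gaussI) = 1 ∧
    gaussI ^ 2 = -1 ∧
    (Ideal.Quotient.mk
        (Ideal.span {(X : Polynomial (Localization.Away (2 : GaussianInt))) ^ 2 - 2 * X}))
        ((C gaussHalfOneSubI * X + C gaussI) ^ 2) =
      (Ideal.Quotient.mk
        (Ideal.span {(X : Polynomial (Localization.Away (2 : GaussianInt))) ^ 2 - 2 * X}))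
        (X - 1) :=
  have ⟨hsq, hai, hmk⟩ := X_sub_one_square_in_localized_gaussian_quotient_general
    (.of_mul_eq_one _ two_mul_invSelf_two) two_mul_gaussHalfOneSubI gaussI_sq
  ⟨hsq, hai, gaussI_sq, hmk⟩
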